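/- The determinant formula Z^det_N(λ₁,…,λ_N; ξ₁,…,ξ_N; θ) is a symmetric function of ξ₁,…,ξ_N: for every permutation π of {1,…,N} and generic parameters, Z^det_N(λ₁,…,λ_N; ξ_{π(1)},…,ξ_{π(N)}; θ) = Z^det_N(λ₁,…,λ_N; ξ₁,…,ξ_N; θ). -/

import Mathlib

/-!
Permuting the `ξ_j` permutes the columns of `M`, so `det M` is multiplied by the sign of the
permutation, and it leaves the double product in the numerator unchanged. Since
`sinh (a + b) * sinh (a - b) = sinh a ^ 2 - sinh b ^ 2`, the `ξ`-dependent part of the denominator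
is the Vandermonde determinant in the variables `sinh ξ_j ^ 2`; it is multiplied by the same sign,
and the two signs cancel.
-/


/-- `M⁺_{ij}` as a function of `λ_i` and `ξ_j`. -/
noncomputable def Mplus (η θ lam ξ : ℂ) : ℂ :=
  1 / Complex.sinh (lam - ξ + η) *
    (1 / Complex.sinh (lam + ξ) -
      Complex.sinh (θ - η) / (Complex.sinh θ * Complex.sinh (lam + ξ + η)))

/-- `M⁻_{ij}` as a function of `λ_i` and `ξ_j`. -/
noncomputable def Mminus (η θ lam ξ : ℂ) : ℂ :=
  1 / Complex.sinh (lam + ξ + η) *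
    (1 / Complex.sinh (lam - ξ) -
      Complex.sinh (θ + η) / (Complex.sinh θ * Complex.sinh (lam - ξ + η)))

/-- The `N × N` matrix `M`. -/
noncomputable def Mmat (η ζ θ : ℂ) {N : ℕ} (lam ξ : Fin N → ℂ) :
    Matrix (Fin N) (Fin N) ℂ :=
  Matrix.of fun i j =>
    Complex.sinh (θ + ζ - lam i) / Complex.sinh (θ + ζ + lam i) * Mplus η θ (lam i) (ξ j) +
      Complex.sinh (ζ - lam i) / Complex.sinh (ζ + lam i) * Mminus η θ (lam i) (ξ j)

/-- The determinant formula `Z^det_N(λ;ξ;θ)` for the partition function of the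
trigonometric SOS model with a reflecting end.  (Here the index `i : Fin N`
corresponds to `i+1 ∈ {1,…,N}` in the usual notation.) -/
noncomputable def Zdet (η ζ : ℂ) {N : ℕ} (lam ξ : Fin N → ℂ) (θ : ℂ) : ℂ :=
  (-1 : ℂ) ^ N * (Mmat η ζ θ lam ξ).det *
    (∏ i : Fin N,
      (Complex.sinh (θ + η * ((N : ℂ) - 2 * (((i : ℕ) : ℂ) + 1))) /
        Complex.sinh (θ + η * ((N : ℂ) - 2 * (((i : ℕ) : ℂ) + 1) + 1))) ^ (N - (i : ℕ))) *
    (∏ i : Fin N, ∏ j : Fin N,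
      Complex.sinh (lam i + ξ j) * Complex.sinh (lam i - ξ j) *
        Complex.sinh (lam i + ξ j + η) * Complex.sinh (lam i - ξ j + η)) /
    (∏ j : Fin N, ∏ i ∈ Finset.Iio j,
      Complex.sinh (ξ j + ξ i) * Complex.sinh (ξ j - ξ i) *
        Complex.sinh (lam j - lam i) * Complex.sinh (lam j + lam i + η))

/-- Genericity of the parameters: all denominators occurring in the determinant
formula are nonzero. -/
def GenericParams (η ζ : ℂ) {N : ℕ} (lam ξ : Fin N → ℂ) (θ : ℂ) : Prop :=
  Complex.sinh θ ≠ 0 ∧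
  (∀ k : ℤ, |k| ≤ (N : ℤ) + 1 → Complex.sinh (θ + (k : ℂ) * η) ≠ 0) ∧
  (∀ i, Complex.sinh (θ + ζ + lam i) ≠ 0) ∧
  (∀ i, Complex.sinh (ζ + lam i) ≠ 0) ∧
  (∀ i j, Complex.sinh (lam i + ξ j) ≠ 0) ∧
  (∀ i j, Complex.sinh (lam i - ξ j) ≠ 0) ∧
  (∀ i j, Complex.sinh (lam i + ξ j + η) ≠ 0) ∧
  (∀ i j, Complex.sinh (lam i - ξ j + η) ≠ 0) ∧
  (∀ i j, i ≠ j → Complex.sinh (ξ j + ξ i) ≠ 0) ∧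
  (∀ i j, i ≠ j → Complex.sinh (ξ j - ξ i) ≠ 0) ∧
  (∀ i j, i ≠ j → Complex.sinh (lam j - lam i) ≠ 0) ∧
  (∀ i j, i ≠ j → Complex.sinh (lam j + lam i + η) ≠ 0)

theorem sinh_add_mul_sinh_sub (a b : ℂ) :
    Complex.sinh (a + b) * Complex.sinh (a - b) = Complex.sinh a ^ 2 - Complex.sinh b ^ 2 := by
  rw [Complex.sinh_add, Complex.sinh_sub]
  linear_combination Complex.sinh a ^ 2 * Complex.cosh_sq b
    - Complex.sinh b ^ 2 * Complex.cosh_sq a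

theorem prod_sinh_eq_det_vandermonde {N : ℕ} (ξ : Fin N → ℂ) :
    (∏ j : Fin N, ∏ i ∈ Finset.Iio j, Complex.sinh (ξ j + ξ i) * Complex.sinh (ξ j - ξ i)) =
      (Matrix.vandermonde fun j => Complex.sinh (ξ j) ^ 2).det := by
  simp only [sinh_add_mul_sinh_sub]
  rw [Matrix.det_vandermonde]
  exact Finset.prod_comm' (by simp)

theorem prod_sinh_perm {N : ℕ} (ξ : Fin N → ℂ) (π : Equiv.Perm (Fin N)) :
    (∏ j : Fin N, ∏ i ∈ Finset.Iio j,
      Complex.sinh (ξ (π j) + ξ (π i)) * Complex.sinh (ξ (π j) - ξ (π i))) =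
      (Equiv.Perm.sign π : ℂ) *
        ∏ j : Fin N, ∏ i ∈ Finset.Iio j, Complex.sinh (ξ j + ξ i) * Complex.sinh (ξ j - ξ i) := by
  rw [prod_sinh_eq_det_vandermonde ξ, prod_sinh_eq_det_vandermonde (fun j => ξ (π j)),
    ← Matrix.det_permute]
  rfl

theorem det_Mmat_perm (η ζ θ : ℂ) {N : ℕ} (lam ξ : Fin N → ℂ) (π : Equiv.Perm (Fin N)) :
    (Mmat η ζ θ lam fun j => ξ (π j)).det =
      (Equiv.Perm.sign π : ℂ) * (Mmat η ζ θ lam ξ).det := by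
  rw [← Matrix.det_permute']
  rfl

/-- `Z^det_N` is a symmetric function of `ξ₁, …, ξ_N`. -/
theorem Zdet_symm_xi (η ζ : ℂ) (N : ℕ) (hN : 1 ≤ N) (lam ξ : Fin N → ℂ) (θ : ℂ)
    (π : Equiv.Perm (Fin N)) (hgen : GenericParams η ζ lam ξ θ) :
    Zdet η ζ lam (fun j => ξ (π j)) θ = Zdet η ζ lam ξ θ := by
  have hs : (Equiv.Perm.sign π : ℂ) ≠ 0 := by
    rcases Int.units_eq_one_or (Equiv.Perm.sign π) with h | h <;> simp [h]
  have hnum : ∀ i : Fin N, (∏ j : Fin N,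
      Complex.sinh (lam i + ξ (π j)) * Complex.sinh (lam i - ξ (π j)) *
        Complex.sinh (lam i + ξ (π j) + η) * Complex.sinh (lam i - ξ (π j) + η)) =
      ∏ j : Fin N, Complex.sinh (lam i + ξ j) * Complex.sinh (lam i - ξ j) *
        Complex.sinh (lam i + ξ j + η) * Complex.sinh (lam i - ξ j + η) := fun i =>
    Equiv.prod_comp π fun j => Complex.sinh (lam i + ξ j) * Complex.sinh (lam i - ξ j) *
      Complex.sinh (lam i + ξ j + η) * Complex.sinh (lam i - ξ j + η)
  -- Splits the `ξ`-dependent Vandermonde product off the denominator.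
  have hden : ∀ x : Fin N → ℂ, (∏ j : Fin N, ∏ i ∈ Finset.Iio j,
      Complex.sinh (x j + x i) * Complex.sinh (x j - x i) *
        Complex.sinh (lam j - lam i) * Complex.sinh (lam j + lam i + η)) =
      (∏ j : Fin N, ∏ i ∈ Finset.Iio j, Complex.sinh (x j + x i) * Complex.sinh (x j - x i)) *
      ∏ j : Fin N, ∏ i ∈ Finset.Iio j,
        Complex.sinh (lam j - lam i) * Complex.sinh (lam j + lam i + η) := fun x => by
    simp only [← Finset.prod_mul_distrib, mul_assoc]
  unfold Zdet
  rw [hden ξ, hden fun j => ξ (π j), prod_sinh_perm, det_Mmat_perm]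
  simp only [hnum]
  rw [mul_left_comm, mul_assoc, mul_assoc, mul_assoc, mul_assoc (Equiv.Perm.sign π : ℂ) _ (∏ j, _),
    mul_div_mul_left _ _ hs]
  simp only [mul_assoc]
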